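/- arXiv:1605.07960 — 2 statements merged into one kernel-verified Lean document; each statement's English description precedes it below -/
import Mathlib

section
/- For all natural numbers m and n, one has ∑_{i=0}^{min{m,n}} C(m, i) · C(n, i) · i! ≥ (max{m,n} / e)^{min{m,n}}, where e is Euler's number and C(n, k) denotes the binomial coefficient. -/
theorem aux_pow (N k : ℕ) (h : k ≤ N) : ((N : ℝ) + 1) ^ k ≤ Real.exp 1 * (N : ℝ) ^ k := by
  rcases Nat.eq_zero_or_pos N with rfl | hN
  · have : k = 0 := by omega
    subst this
    simp
  · have hN' : (0 : ℝ) < N := by exact_mod_cast hN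
    have h1 : (N : ℝ) + 1 ≤ Real.exp (1 / N) * N := by
      have := mul_le_mul_of_nonneg_right (Real.add_one_le_exp (1 / (N : ℝ))) hN'.le
      have e : (1 / (N : ℝ) + 1) * N = N + 1 := by field_simp; ring
      linarith
    have hk : (k : ℝ) * (1 / N) ≤ 1 := by
      rw [mul_one_div, div_le_one hN']
      exact_mod_cast h
    calc ((N : ℝ) + 1) ^ k ≤ (Real.exp (1 / N) * N) ^ k := by gcongr
      _ = Real.exp (k * (1 / N)) * (N : ℝ) ^ k := by rw [mul_pow, Real.exp_nat_mul]
      _ ≤ Real.exp 1 * (N : ℝ) ^ k := by gcongr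

theorem aux_desc (k : ℕ) : ∀ N : ℕ, k ≤ N →
    (N : ℝ) ^ k ≤ (N.descFactorial k : ℝ) * Real.exp 1 ^ k := by
  induction k with
  | zero => intro N _; simp
  | succ k ih =>
    intro N h
    obtain ⟨M, rfl⟩ : ∃ M, N = M + 1 := ⟨N - 1, by omega⟩
    have hM : k ≤ M := by omega
    rw [Nat.succ_descFactorial_succ]
    push_cast
    calc ((M : ℝ) + 1) ^ (k + 1) = (M + 1) * (M + 1) ^ k := by ring
      _ ≤ (M + 1) * (Real.exp 1 * (M : ℝ) ^ k) := by gcongr; exact aux_pow M k hM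
      _ ≤ (M + 1) * (Real.exp 1 * ((M.descFactorial k : ℝ) * Real.exp 1 ^ k)) := by
        gcongr; exact ih M hM
      _ = _ := by ring

theorem aux_main (N k : ℕ) (h : k ≤ N) :
    ((N : ℝ) / Real.exp 1) ^ k ≤ (N.descFactorial k : ℝ) := by
  rw [div_pow, div_le_iff₀ (by positivity)]
  exact aux_desc k N h

/-- The number of terms of the full observation function satisfies
`∑ i ≤ min m n, C(m, i) · C(n, i) · i! ≥ (max m n / e) ^ (min m n)`. -/
theorem stmt_8 (m n : ℕ) :
    ((∑ i ∈ Finset.range (min m n + 1),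
          m.choose i * n.choose i * i.factorial : ℕ) : ℝ) ≥
      ((max m n : ℝ) / Real.exp 1) ^ (min m n) := by
  have hs := Finset.single_le_sum (f := fun i => m.choose i * n.choose i * i.factorial)
    (fun i _ => Nat.zero_le _) (Finset.self_mem_range_succ (min m n))
  have hs' : ((m.choose (min m n) * n.choose (min m n) * (min m n).factorial : ℕ) : ℝ) ≤
    ((∑ i ∈ Finset.range (min m n + 1),
          m.choose i * n.choose i * i.factorial : ℕ) : ℝ) := by exact_mod_cast hs
  refine le_trans ?_ hs'
  rcases le_total m n with h | h
  · have h' : (m : ℝ) ≤ n := by exact_mod_cast h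
    rw [min_eq_left h, max_eq_right h', Nat.choose_self, one_mul, mul_comm,
      ← Nat.descFactorial_eq_factorial_mul_choose]
    exact aux_main n m h
  · have h' : (n : ℝ) ≤ m := by exact_mod_cast h
    rw [min_eq_right h, max_eq_left h', Nat.choose_self, mul_one, mul_comm,
      ← Nat.descFactorial_eq_factorial_mul_choose]
    exact aux_main m n h
end

section
/- Let a, b : ℕ → ℝ be antitone (nonincreasing) functions with nonnegative values, and define the value of a pair (i, j) ∈ ℕ × ℕ as v(i, j) = a(i) · b(j). Suppose Q : ℕ → Finset (ℕ × ℕ) and p : ℕ → ℕ × ℕ satisfy, for every k: (1) p(k) ∈ Q(k) and v(p(k)) ≥ v(q) for all q ∈ Q(k) (the popped element maximizes the value over the queue), and (2) Q(k+1) ⊆ (Q(k) \ {p(k)}) ∪ {(p(k).1 + 1, p(k).2), (p(k).1, p(k).2 + 1)} (after popping, only the two successors of the popped pair may be inserted). Then for every k, v(p(k+1)) ≤ v(p(k)); that is, the sequence of popped values is nonincreasing. -/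
/-- Abstract priority-queue argument: if `a`, `b` are nonnegative antitone sequences,
each popped pair `p k` maximizes the value `a i · b j` over the current queue `Q k`,
and after popping only the two index-successors of the popped pair may be inserted,
then the sequence of popped values is nonincreasing. -/
theorem stmt_10 (a b : ℕ → ℝ) (ha : Antitone a) (hb : Antitone b)
    (ha0 : ∀ i, 0 ≤ a i) (hb0 : ∀ j, 0 ≤ b j)
    (Q : ℕ → Finset (ℕ × ℕ)) (p : ℕ → ℕ × ℕ)
    (hmem : ∀ k, p k ∈ Q k)
    (hmax : ∀ k, ∀ q ∈ Q k, a q.1 * b q.2 ≤ a (p k).1 * b (p k).2)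
    (hins : ∀ k, Q (k + 1) ⊆
      (Q k \ {p k}) ∪ {((p k).1 + 1, (p k).2), ((p k).1, (p k).2 + 1)}) :
    ∀ k, a (p (k + 1)).1 * b (p (k + 1)).2 ≤ a (p k).1 * b (p k).2 := by
  intro k
  have h := hins k (hmem (k + 1))
  rw [Finset.mem_union, Finset.mem_sdiff, Finset.mem_insert, Finset.mem_singleton,
    Finset.mem_singleton] at h
  rcases h with h | h | h
  · exact hmax k _ h.1
  · rw [h]
    exact mul_le_mul_of_nonneg_right (ha (Nat.le_succ _)) (hb0 _)
  · rw [h]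
    exact mul_le_mul_of_nonneg_left (hb (Nat.le_succ _)) (ha0 _)
end
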